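/- Let θ > 0 and f ∈ 𝒮. Then for every t > 0 the map t ↦ P_t f(x) is differentiable, and: (i) for every x > 0, ∂_t (P_t f)(x) = (1/2)·(P_t f)''(x); (ii) at x = 0, ∂_t (P_t f)(0) = θ·(P_t f)'(0⁺). (That is, u(t,x) = P_t f(x) satisfies the Kolmogorov backward equation ∂_t u = 𝒜 u for the sticky Brownian motion generator 𝒜, where 𝒜h(x) = (1/2)h''(x) for x > 0 and 𝒜h(0) = θ·h'(0⁺).) -/

import Mathlib

open MeasureTheory Real Filter Set

/-- Complementary error function `erfc(x) = (2/√π)·∫_x^∞ e^{−y²} dy`. -/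
noncomputable def erfc (x : ℝ) : ℝ :=
  (2 / Real.sqrt Real.pi) * ∫ y in Set.Ioi x, Real.exp (-y ^ 2)

/-- `g_t(x) = θ·exp(2θx + 2θ²t)·erfc(x/√(2t) + θ·√(2t))`. -/
noncomputable def gfun (θ t x : ℝ) : ℝ :=
  θ * Real.exp (2 * θ * x + 2 * θ ^ 2 * t) *
    erfc (x / Real.sqrt (2 * t) + θ * Real.sqrt (2 * t))

/-- The Gaussian kernel `p_t(x,y) = (2πt)^{−1/2}·exp(−(y−x)²/(2t))`. -/
noncomputable def pker (t x y : ℝ) : ℝ :=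
  (Real.sqrt (2 * Real.pi * t))⁻¹ * Real.exp (-(y - x) ^ 2 / (2 * t))

/-- The sticky Brownian motion semigroup:
`P_t f(x) = ∫_0^∞ (p_t(x,y) − p_t(x,−y) + 2 g_t(x+y)) f(y) dy + (1/θ) g_t(x) f(0)`. -/
noncomputable def Pt (θ t : ℝ) (f : ℝ → ℝ) (x : ℝ) : ℝ :=
  (∫ y in Set.Ioi (0:ℝ), (pker t x y - pker t x (-y) + 2 * gfun θ t (x + y)) * f y)
    + (1 / θ) * gfun θ t x * f 0

/-- `f ∈ 𝒮`: `f` is C² on `(0,∞)`, the one-sided limits `f(0⁺)`, `f'(0⁺)`, `f''(0⁺)` exist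
and are finite, and `lim_{x→∞} f(x) = 0`. -/
def memS (f : ℝ → ℝ) : Prop :=
  ContDiffOn ℝ 2 f (Set.Ioi 0) ∧
  (∃ a : ℝ, Filter.Tendsto f (nhdsWithin 0 (Set.Ioi 0)) (nhds a)) ∧
  (∃ b : ℝ, Filter.Tendsto (deriv f) (nhdsWithin 0 (Set.Ioi 0)) (nhds b)) ∧
  (∃ c : ℝ, Filter.Tendsto (deriv (deriv f)) (nhdsWithin 0 (Set.Ioi 0)) (nhds c)) ∧
  Filter.Tendsto f Filter.atTop (nhds 0)

open Topology

def Good (H : ℝ → ℝ → ℝ) : Prop :=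
  (∀ t, 0 < t → Continuous (H t)) ∧
  ∀ t₀, 0 < t₀ → ∃ C : ℝ, ∀ᶠ t in 𝓝 t₀, ∀ z, |H t z| ≤ C * Real.exp (-z)

lemma Good.of_bound {H : ℝ → ℝ → ℝ} (c : ℝ → ℝ) (hc : ∀ t, 0 < t → Continuous (H t))
    (hcc : ∀ t, 0 < t → ContinuousAt c t)
    (hb : ∀ t, 0 < t → ∀ z, |H t z| ≤ c t * Real.exp (-z)) : Good H := by
  refine ⟨hc, fun t₀ ht => ⟨c t₀ + 1, ?_⟩⟩
  have h1 : ∀ᶠ t in 𝓝 t₀, c t < c t₀ + 1 := (hcc t₀ ht).eventually_lt_const (by linarith)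
  filter_upwards [h1, lt_mem_nhds ht] with t h1 h2 z
  exact (hb t h2 z).trans (mul_le_mul_of_nonneg_right h1.le (Real.exp_pos _).le)

lemma Good.sub {H G : ℝ → ℝ → ℝ} (hH : Good H) (hG : Good G) :
    Good (fun t z => H t z - G t z) := by
  refine ⟨fun t ht => (hH.1 t ht).sub (hG.1 t ht), fun t₀ ht => ?_⟩
  obtain ⟨C, h⟩ := hH.2 t₀ ht
  obtain ⟨D, h'⟩ := hG.2 t₀ ht
  refine ⟨C + D, ?_⟩
  filter_upwards [h, h'] with t h h' z
  have := abs_sub (H t z) (G t z)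
  have := h z
  have := h' z
  linarith

lemma Good.smul {H : ℝ → ℝ → ℝ} (k : ℝ) (hH : Good H) :
    Good (fun t z => k * H t z) := by
  refine ⟨fun t ht => (hH.1 t ht).const_mul k, fun t₀ ht => ?_⟩
  obtain ⟨C, h⟩ := hH.2 t₀ ht
  refine ⟨|k| * C, ?_⟩
  filter_upwards [h] with t h z
  rw [abs_mul, mul_assoc]
  exact mul_le_mul_of_nonneg_left (h z) (abs_nonneg _)

noncomputable def II (H : ℝ → ℝ → ℝ) (f : ℝ → ℝ) (t x : ℝ) : ℝ :=
  ∫ y in Ioi (0:ℝ), H t (y + x) * f y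

structure GF (f : ℝ → ℝ) (M : ℝ) : Prop where
  meas : AEStronglyMeasurable f (volume.restrict (Ioi 0))
  bd : ∀ y, 0 < y → |f y| ≤ M

lemma memS.gf {f : ℝ → ℝ} (hf : memS f) : ∃ M, GF f M := by
  obtain ⟨hc, ⟨a, ha⟩, -, -, hi⟩ := hf
  have hcon : ContinuousOn f (Ioi 0) := hc.continuousOn
  have h1 : ∀ᶠ y in 𝓝[>] (0:ℝ), |f y| < |a| + 1 := ha.abs.eventually_lt_const (by linarith)
  have h2 : ∀ᶠ y in atTop, |f y| < 1 := by
    have := hi.abs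
    rw [abs_zero] at this
    exact this.eventually_lt_const one_pos
  obtain ⟨d, hd, hd'⟩ := mem_nhdsGT_iff_exists_Ioo_subset.1 h1
  obtain ⟨N, hN⟩ := eventually_atTop.1 h2
  have hd0 : 0 < d := hd
  obtain ⟨C, hC⟩ := (isCompact_Icc (a := d) (b := N)).exists_bound_of_continuousOn
    (hcon.mono (fun y hy => lt_of_lt_of_le hd0 hy.1))
  refine ⟨|a| + 1 + |C|, hcon.aestronglyMeasurable measurableSet_Ioi, fun y hy => ?_⟩
  have := abs_nonneg a
  have := abs_nonneg C
  rcases lt_or_ge y d with h | h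
  · have : |f y| < |a| + 1 := hd' ⟨hy, h⟩
    linarith
  · rcases le_or_gt y N with h' | h'
    · have := hC y ⟨h, h'⟩
      rw [Real.norm_eq_abs] at this
      have := le_abs_self C
      linarith
    · have := hN y h'.le
      linarith

lemma Good.aesm {H : ℝ → ℝ → ℝ} (hH : Good H) {f : ℝ → ℝ} {M : ℝ} (hf : GF f M) {t : ℝ}
    (ht : 0 < t) (x : ℝ) :
    AEStronglyMeasurable (fun y => H t (y + x) * f y) (volume.restrict (Ioi 0)) := by
  have := (hH.1 t ht).comp (continuous_id.add (continuous_const (y := x)))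
  exact this.aestronglyMeasurable.mul hf.meas

lemma intexp (C : ℝ) : Integrable (fun y : ℝ => C * Real.exp (-y)) (volume.restrict (Ioi 0)) :=
  (integrableOn_exp_neg_Ioi 0).const_mul C

lemma Good.bd' {H : ℝ → ℝ → ℝ} {C t x M : ℝ} (h : ∀ z, |H t z| ≤ C * Real.exp (-z)) {f : ℝ → ℝ}
    (hf : GF f M) {y : ℝ} (hy : 0 < y) (r : ℝ) (hx : -x ≤ r):
    ‖H t (y + x) * f y‖ ≤ (C * Real.exp r * M) * Real.exp (-y) := by
  have h1 := h (y + x)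
  have h2 := hf.bd y hy
  have hC : 0 ≤ C := by
    have := (abs_nonneg _).trans (h 0)
    simpa using this
  have h3 : Real.exp (-(y+x)) ≤ Real.exp r * Real.exp (-y) := by
    rw [← Real.exp_add]; exact Real.exp_le_exp.2 (by linarith)
  have h4 : |H t (y + x)| ≤ C * (Real.exp r * Real.exp (-y)) :=
    h1.trans (mul_le_mul_of_nonneg_left h3 hC)
  rw [Real.norm_eq_abs, abs_mul]
  calc _ ≤ (C * (Real.exp r * Real.exp (-y))) * M :=
        mul_le_mul h4 h2 (abs_nonneg _) (by positivity)
    _ = _ := by ring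

lemma Good.int {H : ℝ → ℝ → ℝ} (hH : Good H) {f : ℝ → ℝ} {M : ℝ} (hf : GF f M) {t : ℝ}
    (ht : 0 < t) (x : ℝ) :
    Integrable (fun y => H t (y + x) * f y) (volume.restrict (Ioi 0)) := by
  obtain ⟨C, hC⟩ := hH.2 t ht
  have hC := hC.self_of_nhds
  refine (intexp (C * Real.exp (-x) * M)).mono' (hH.aesm hf ht x) ?_
  filter_upwards [ae_restrict_mem measurableSet_Ioi] with y hy
  exact Good.bd' hC hf hy _ le_rfl

lemma Good.derivx {H H' : ℝ → ℝ → ℝ} (hH : Good H) (hH' : Good H') {f : ℝ → ℝ} {M : ℝ}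
    (hf : GF f M) (hd : ∀ t, 0 < t → ∀ z, HasDerivAt (H t) (H' t z) z) {t : ℝ}
    (ht : 0 < t) (x : ℝ) : HasDerivAt (II H f t) (II H' f t x) x := by
  obtain ⟨C, hC⟩ := hH'.2 t ht
  have hC := hC.self_of_nhds
  refine (hasDerivAt_integral_of_dominated_loc_of_deriv_le
    (bound := fun y => (C * Real.exp (-x + 1) * M) * Real.exp (-y))
    (F := fun x y => H t (y + x) * f y) (F' := fun x y => H' t (y + x) * f y)
    (s := Metric.ball x 1) (Metric.ball_mem_nhds x one_pos)
    (Eventually.of_forall fun x => hH.aesm hf ht x) (hH.int hf ht x)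
    (hH'.aesm hf ht x) ?_ (intexp _) ?_).2
  · filter_upwards [ae_restrict_mem measurableSet_Ioi] with y hy x' hx'
    refine Good.bd' hC hf hy _ ?_
    rw [Metric.mem_ball, Real.dist_eq, abs_lt] at hx'
    linarith
  · refine Eventually.of_forall fun y x' _ => ?_
    have := (hd t ht (y + x')).comp_const_add y x'
    exact this.mul_const (f y)

lemma Good.derivt {H H' : ℝ → ℝ → ℝ} (hH : Good H) (hH' : Good H') {f : ℝ → ℝ} {M : ℝ}
    (hf : GF f M) (hd : ∀ t, 0 < t → ∀ z, HasDerivAt (fun s => H s z) (H' t z) t) {t : ℝ}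
    (ht : 0 < t) (x : ℝ) : HasDerivAt (fun s => II H f s x) (II H' f t x) t := by
  obtain ⟨C, hC⟩ := hH'.2 t ht
  refine (hasDerivAt_integral_of_dominated_loc_of_deriv_le
    (bound := fun y => (C * Real.exp (-x) * M) * Real.exp (-y))
    (F := fun s y => H s (y + x) * f y) (F' := fun s y => H' s (y + x) * f y)
    (s := {s | (∀ z, |H' s z| ≤ C * Real.exp (-z)) ∧ 0 < s}) (hC.and (lt_mem_nhds ht))
    ((lt_mem_nhds ht).mono fun s hs => hH.aesm hf hs x) (hH.int hf ht x)
    (hH'.aesm hf ht x) ?_ (intexp _) ?_).2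
  · filter_upwards [ae_restrict_mem measurableSet_Ioi] with y hy s hs
    exact Good.bd' hs.1 hf hy _ le_rfl
  · exact Eventually.of_forall fun y s hs => (hd s hs.2 (y + x)).mul_const (f y)

noncomputable def ph (t z : ℝ) : ℝ := (Real.sqrt (2 * Real.pi * t))⁻¹ * Real.exp (-z ^ 2 / (2 * t))
noncomputable def ph1 (t z : ℝ) : ℝ := -(z / t) * ph t z
noncomputable def ph2 (t z : ℝ) : ℝ := (z ^ 2 / t ^ 2 - 1 / t) * ph t z

lemma ph_dx (t : ℝ) (ht : 0 < t) (z : ℝ) : HasDerivAt (ph t) (ph1 t z) z := by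
  have h : HasDerivAt (fun z : ℝ => -z ^ 2 / (2 * t)) (-(z / t)) z := by
    have := ((hasDerivAt_pow 2 z).neg).div_const (2 * t)
    refine this.congr_deriv ?_
    field_simp
    norm_num
  refine (h.exp.const_mul (Real.sqrt (2 * Real.pi * t))⁻¹).congr_deriv ?_
  simp only [ph1, ph]; ring

lemma ph1_dx (t : ℝ) (ht : 0 < t) (z : ℝ) : HasDerivAt (ph1 t) (ph2 t z) z := by
  refine ((((hasDerivAt_id z).div_const t).neg).mul (ph_dx t ht z)).congr_deriv ?_
  simp only [ph1, ph2, id]; ring_nf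
  simp; ring

lemma ph_dt (t : ℝ) (ht : 0 < t) (z : ℝ) : HasDerivAt (fun s => ph s z) (1/2 * ph2 t z) t := by
  have h : HasDerivAt (fun s : ℝ => -z ^ 2 / (2 * s)) (z ^ 2 / (2 * t ^ 2)) t := by
    have := (hasDerivAt_const t (-z ^ 2)).div ((hasDerivAt_id t).const_mul 2) (by simp; exact ht.ne')
    refine this.congr_deriv ?_
    simp; field_simp
  have hpos : 0 < 2 * Real.pi * t := by positivity
  have h2 : HasDerivAt (fun s : ℝ => (Real.sqrt (2 * Real.pi * s))⁻¹)
      (-(1 / (2 * t)) * (Real.sqrt (2 * Real.pi * t))⁻¹) t := by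
    have := ((((hasDerivAt_id t).const_mul (2 * Real.pi)).sqrt hpos.ne')).inv
      (Real.sqrt_pos.2 hpos).ne'
    refine this.congr_deriv ?_
    simp only [id]
    rw [Real.sq_sqrt hpos.le]
    have := (Real.sqrt_pos.2 hpos).ne'
    field_simp
  refine (h2.mul h.exp).congr_deriv ?_
  simp only [ph2, ph]; field_simp; ring

lemma ph_bound (t : ℝ) (ht : 0 < t) (z : ℝ) :
    (1 + z ^ 2) * ph t z ≤ (1 + 4 * t) * Real.exp t * (Real.sqrt (2 * Real.pi * t))⁻¹ * Real.exp (-z) := by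
  have h1 : 1 + z ^ 2 ≤ (1 + 4 * t) * Real.exp (z ^ 2 / (4 * t)) := by
    have h := Real.add_one_le_exp (z ^ 2 / (4 * t))
    have h0 : 0 ≤ z ^ 2 / (4 * t) := by positivity
    have h3 : z ^ 2 = 4 * t * (z ^ 2 / (4 * t)) := by field_simp
    nlinarith
  have h2 : Real.exp (z ^ 2 / (4 * t)) * Real.exp (-z ^ 2 / (2 * t)) ≤ Real.exp t * Real.exp (-z) := by
    rw [← Real.exp_add, ← Real.exp_add]
    apply Real.exp_le_exp.2
    have : t + -z - (z ^ 2 / (4 * t) + -z ^ 2 / (2 * t)) = (z - 2 * t) ^ 2 / (4 * t) := by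
      field_simp; ring
    have h0 : 0 ≤ (z - 2 * t) ^ 2 / (4 * t) := by positivity
    linarith
  have hs : 0 ≤ (Real.sqrt (2 * Real.pi * t))⁻¹ := by positivity
  unfold ph
  calc (1 + z ^ 2) * ((Real.sqrt (2 * Real.pi * t))⁻¹ * Real.exp (-z ^ 2 / (2 * t)))
      ≤ ((1 + 4 * t) * Real.exp (z ^ 2 / (4 * t))) * ((Real.sqrt (2 * Real.pi * t))⁻¹ * Real.exp (-z ^ 2 / (2 * t))) :=
        mul_le_mul_of_nonneg_right h1 (by positivity)
    _ = (1 + 4 * t) * (Real.sqrt (2 * Real.pi * t))⁻¹ * (Real.exp (z ^ 2 / (4 * t)) * Real.exp (-z ^ 2 / (2 * t))) := by ring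
    _ ≤ (1 + 4 * t) * (Real.sqrt (2 * Real.pi * t))⁻¹ * (Real.exp t * Real.exp (-z)) :=
        mul_le_mul_of_nonneg_left h2 (by positivity)
    _ = _ := by ring

lemma ph_cont (t : ℝ) : Continuous (ph t) := by unfold ph; fun_prop

lemma ph_nonneg (t z : ℝ) : 0 ≤ ph t z := by unfold ph; positivity

lemma ph_poly {H : ℝ → ℝ → ℝ} (c : ℝ → ℝ) (hc : ∀ t, 0 < t → ContinuousAt c t)
    (hH : ∀ t, Continuous (H t))
    (hb : ∀ t, 0 < t → ∀ z, |H t z| ≤ c t * (1 + z ^ 2)) : Good (fun t z => H t z * ph t z) := by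
  refine Good.of_bound (fun t => c t * ((1 + 4 * t) * Real.exp t * (Real.sqrt (2 * Real.pi * t))⁻¹))
    (fun t _ => (hH t).mul (ph_cont t)) ?_ ?_
  · intro t ht
    have h : Real.sqrt (2 * Real.pi * t) ≠ 0 := by positivity
    have := hc t ht
    fun_prop (disch := assumption)
  · intro t ht z
    have h1 := hb t ht z
    have h2 := ph_bound t ht z
    have hc0 : 0 ≤ c t := by
      have := (abs_nonneg _).trans (hb t ht 0)
      simpa using this
    rw [abs_mul, abs_of_nonneg (ph_nonneg t z)]
    calc _ ≤ c t * (1 + z ^ 2) * ph t z := mul_le_mul_of_nonneg_right h1 (ph_nonneg t z)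
      _ = c t * ((1 + z ^ 2) * ph t z) := by ring
      _ ≤ _ := mul_le_mul_of_nonneg_left h2 hc0
      _ = _ := by ring

lemma ph_good : Good ph := by
  have := ph_poly (H := fun _ _ => 1) (fun _ => 1) (fun t _ => continuousAt_const)
    (fun t => continuous_const) (fun t _ z => by simp; positivity)
  simpa using this

lemma ph1_good : Good ph1 := by
  refine ph_poly (H := fun t z => -(z / t)) (fun t => 1 / t) (fun t ht => ?_)
    (fun t => by fun_prop) (fun t ht z => ?_)
  · have := ht.ne'
    fun_prop (disch := assumption)
  · rw [abs_neg, abs_div, abs_of_pos ht, div_mul_eq_mul_div, one_mul]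
    gcongr
    nlinarith [sq_abs z, sq_nonneg (|z| - 1), abs_nonneg z]

lemma ph2_good : Good ph2 := by
  refine ph_poly (H := fun t z => z ^ 2 / t ^ 2 - 1 / t) (fun t => 1 / t ^ 2 + 1 / t) (fun t ht => ?_)
    (fun t => by fun_prop) (fun t ht z => ?_)
  · have := ht.ne'
    have : t ^ 2 ≠ 0 := by positivity
    fun_prop (disch := assumption)
  · have h1 : 0 ≤ z ^ 2 / t ^ 2 := by positivity
    have h2 : 0 ≤ 1 / t := by positivity
    have h3 : 0 ≤ 1 / t ^ 2 := by positivity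
    have h4 : 0 ≤ 1 / t * z ^ 2 := by positivity
    have h5 : z ^ 2 / t ^ 2 = 1 / t ^ 2 * z ^ 2 := by ring
    rw [abs_le]
    constructor <;> nlinarith

lemma gauss_int : Integrable (fun y : ℝ => Real.exp (-y ^ 2)) := by
  simpa using integrable_exp_neg_mul_sq (b := 1) one_pos

lemma erfc_deriv (x : ℝ) : HasDerivAt erfc (-(2 / Real.sqrt Real.pi) * Real.exp (-x ^ 2)) x := by
  have h : ∀ x, erfc x = (2 / Real.sqrt Real.pi) *
      ((∫ y in Ioi (0:ℝ), Real.exp (-y ^ 2)) - ∫ y in (0:ℝ)..x, Real.exp (-y ^ 2)) := by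
    intro x
    unfold erfc
    rw [← intervalIntegral.integral_interval_add_Ioi (a := 0) (b := x) gauss_int.integrableOn
      gauss_int.integrableOn]
    ring
  have hc : Continuous fun y : ℝ => Real.exp (-y ^ 2) := by fun_prop
  rw [show erfc = _ from funext h]
  refine (((hc.integral_hasStrictDerivAt 0 x).hasDerivAt.const_sub _).const_mul _).congr_deriv ?_
  ring

lemma erfc_nonneg (x : ℝ) : 0 ≤ erfc x := by
  unfold erfc
  have : 0 ≤ ∫ y in Ioi x, Real.exp (-y ^ 2) := integral_nonneg fun y => (Real.exp_pos _).le
  positivity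

lemma erfc_bound (k : ℝ) (hk : 0 < k) (w : ℝ) :
    erfc w ≤ (2 / Real.sqrt Real.pi) * (Real.exp (k ^ 2 / 4) / k * Real.exp (-(k * w))) := by
  unfold erfc
  refine mul_le_mul_of_nonneg_left ?_ (by positivity)
  have hi := integral_exp_mul_Ioi (a := -k) (by linarith) w
  have hI : IntegrableOn (fun y => Real.exp (-k * y)) (Ioi w) :=
    integrableOn_exp_mul_Ioi (by linarith) w
  calc _ ≤ ∫ y in Ioi w, Real.exp (k ^ 2 / 4) * Real.exp (-k * y) := by
        refine integral_mono gauss_int.integrableOn (hI.const_mul _) fun y => ?_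
        simp only
        rw [← Real.exp_add]
        apply Real.exp_le_exp.2
        nlinarith [sq_nonneg (y - k / 2)]
    _ = _ := by
        rw [integral_const_mul, hi, neg_mul]
        field_simp

lemma gsq (θ t z : ℝ) (ht : 0 < t) :
    Real.exp (2 * θ * z + 2 * θ ^ 2 * t) *
      Real.exp (-(z / Real.sqrt (2 * t) + θ * Real.sqrt (2 * t)) ^ 2) = Real.exp (-z ^ 2 / (2 * t)) := by
  rw [← Real.exp_add]
  congr 1
  have h := Real.sq_sqrt (show 0 ≤ 2 * t by positivity)
  have h0 : Real.sqrt (2 * t) ≠ 0 := by positivity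
  have : (z / Real.sqrt (2 * t) + θ * Real.sqrt (2 * t)) ^ 2 =
      z ^ 2 / Real.sqrt (2 * t) ^ 2 + 2 * θ * z + θ ^ 2 * Real.sqrt (2 * t) ^ 2 := by
    field_simp; ring
  rw [this, h]; ring

lemma sqsplit (t : ℝ) : (Real.sqrt (2 * Real.pi * t))⁻¹ = (Real.sqrt Real.pi)⁻¹ * (Real.sqrt (2 * t))⁻¹ := by
  rw [show 2 * Real.pi * t = Real.pi * (2 * t) by ring, Real.sqrt_mul Real.pi_pos.le, mul_inv]

lemma g_dx (θ t : ℝ) (ht : 0 < t) (z : ℝ) :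
    HasDerivAt (gfun θ t) (2 * θ * (gfun θ t z - ph t z)) z := by
  have h1 : HasDerivAt (fun x => 2 * θ * x + 2 * θ ^ 2 * t) (2 * θ) z := by
    simpa using ((hasDerivAt_id z).const_mul (2 * θ)).add_const (2 * θ ^ 2 * t)
  have h2 : HasDerivAt (fun x => x / Real.sqrt (2 * t) + θ * Real.sqrt (2 * t))
      (1 / Real.sqrt (2 * t)) z :=
    ((hasDerivAt_id z).div_const _).add_const _
  have h3 := (erfc_deriv _).comp z h2
  refine ((h1.exp.const_mul θ).mul h3).congr_deriv ?_
  have h := gsq θ t z ht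
  simp only [Function.comp, gfun, ph, ← h, sqsplit]
  ring

lemma g_dt (θ t : ℝ) (ht : 0 < t) (z : ℝ) :
    HasDerivAt (fun s => gfun θ s z)
      (1/2 * (2 * θ * (2 * θ * (gfun θ t z - ph t z) - ph1 t z))) t := by
  have h1 : HasDerivAt (fun s => 2 * θ * z + 2 * θ ^ 2 * s) (2 * θ ^ 2) t := by
    simpa using ((hasDerivAt_id t).const_mul (2 * θ ^ 2)).const_add (2 * θ * z)
  have h0 : Real.sqrt (2 * t) ≠ 0 := by positivity
  have hsq := Real.sq_sqrt (show 0 ≤ 2 * t by positivity)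
  have hs : HasDerivAt (fun s => Real.sqrt (2 * s)) (1 / Real.sqrt (2 * t)) t := by
    refine (((hasDerivAt_id t).const_mul 2).sqrt (by simp; exact ht.ne')).congr_deriv ?_
    simp; ring
  have h2 : HasDerivAt (fun s => z / Real.sqrt (2 * s) + θ * Real.sqrt (2 * s))
      (-(z / (2 * t)) * (Real.sqrt (2 * t))⁻¹ + θ * (Real.sqrt (2 * t))⁻¹) t := by
    refine (((hasDerivAt_const t z).div hs h0).add (hs.const_mul θ)).congr_deriv ?_
    rw [hsq]; field_simp; ring
  have h3 := (erfc_deriv _).comp t h2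
  refine ((h1.exp.const_mul θ).mul h3).congr_deriv ?_
  have h := gsq θ t z ht
  simp only [Function.comp, gfun, ph1, ph, ← h, sqsplit]
  ring

lemma g_good (θ : ℝ) (hθ : 0 < θ) : Good (gfun θ) := by
  refine Good.of_bound
    (fun t => θ * (2 / Real.sqrt Real.pi) * Real.exp (t / 2) / ((2 * θ + 1) * Real.sqrt (2 * t)))
    (fun t ht => continuous_iff_continuousAt.2 fun z => (g_dx θ t ht z).continuousAt) ?_ ?_
  · intro t ht
    have : (2 * θ + 1) * Real.sqrt (2 * t) ≠ 0 := by positivity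
    fun_prop (disch := assumption)
  · intro t ht z
    have hs0 : 0 < Real.sqrt (2 * t) := by positivity
    have hsq := Real.sq_sqrt (show 0 ≤ 2 * t by positivity)
    have hb := erfc_bound ((2 * θ + 1) * Real.sqrt (2 * t)) (by positivity)
      (z / Real.sqrt (2 * t) + θ * Real.sqrt (2 * t))
    have hn := erfc_nonneg (z / Real.sqrt (2 * t) + θ * Real.sqrt (2 * t))
    unfold gfun
    rw [abs_of_nonneg (by positivity)]
    have e1 : ((2 * θ + 1) * Real.sqrt (2 * t)) ^ 2 / 4 = (2 * θ + 1) ^ 2 * t / 2 := by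
      rw [mul_pow, hsq]; ring
    have e2 : (2 * θ + 1) * Real.sqrt (2 * t) * (z / Real.sqrt (2 * t) + θ * Real.sqrt (2 * t))
        = (2 * θ + 1) * (z + 2 * θ * t) := by
      have : (2 * θ + 1) * Real.sqrt (2 * t) * (z / Real.sqrt (2 * t) + θ * Real.sqrt (2 * t))
        = (2 * θ + 1) * (z + θ * Real.sqrt (2 * t) ^ 2) := by field_simp
      rw [this, hsq]; ring
    have e3 : Real.exp (2 * θ * z + 2 * θ ^ 2 * t) * Real.exp ((2 * θ + 1) ^ 2 * t / 2) *
        Real.exp (-((2 * θ + 1) * (z + 2 * θ * t))) = Real.exp (t / 2) * Real.exp (-z) := by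
      simp only [← Real.exp_add]; congr 1; ring
    rw [e1, e2] at hb
    refine (mul_le_mul_of_nonneg_left hb (by positivity)).trans (le_of_eq ?_)
    have : ∀ a b c d e k : ℝ, θ * a * (d * (b / k * c)) = θ * d * (a * b * c) / k := by
      intros; ring
    rw [this _ _ _ _ 0, e3]
    ring

lemma II_lin {H G : ℝ → ℝ → ℝ} (hH : Good H) (hG : Good G) {f : ℝ → ℝ} {M : ℝ} (hf : GF f M)
    (k t x : ℝ) (ht : 0 < t) :
    II (fun t z => k * (H t z - G t z)) f t x = k * (II H f t x - II G f t x) := by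
  unfold II
  rw [← integral_sub (hH.int hf ht x) (hG.int hf ht x), ← integral_const_mul]
  congr 1; ext y; ring

lemma II_smul {H : ℝ → ℝ → ℝ} {f : ℝ → ℝ}
    (k t x : ℝ) :
    II (fun t z => k * H t z) f t x = k * II H f t x := by
  unfold II
  rw [← integral_const_mul]
  congr 1; ext y; ring

lemma Pt_eq (θ : ℝ) (hθ : 0 < θ) {f : ℝ → ℝ} {M : ℝ} (hf : GF f M) (t x : ℝ) (ht : 0 < t) :
    Pt θ t f x = II ph f t (-x) - II ph f t x + 2 * II (gfun θ) f t x
      + (1 / θ) * gfun θ t x * f 0 := by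
  have hi : Integrable (fun y => ph t (y + -x) * f y - ph t (y + x) * f y)
    (volume.restrict (Ioi 0)) := (ph_good.int hf ht (-x)).sub (ph_good.int hf ht x)
  unfold Pt II
  rw [← integral_sub (ph_good.int hf ht (-x)) (ph_good.int hf ht x), ← integral_const_mul,
    ← integral_add hi
      (((g_good θ hθ).int hf ht x).const_mul 2)]
  congr 2; ext y
  simp only [pker, ph, add_comm x y]
  rw [show (-y - x) ^ 2 = (y + x) ^ 2 by ring, show y - x = y + -x by ring]
  ring

/-- For `f ∈ 𝒮`, the map `t ↦ P_t f(x)` is differentiable for every `t > 0` and `x ≥ 0`, and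
`u(t,x) = P_t f(x)` satisfies the Kolmogorov backward equation for the sticky Brownian motion
generator: `∂_t (P_t f)(x) = (1/2)(P_t f)''(x)` for `x > 0`, and
`∂_t (P_t f)(0) = θ·(P_t f)'(0⁺)`. -/
theorem Pt_backward_equation (θ : ℝ) (hθ : 0 < θ) (f : ℝ → ℝ) (hf : memS f) :
    ∀ t : ℝ, 0 < t →
      (∀ x : ℝ, 0 ≤ x → DifferentiableAt ℝ (fun s : ℝ => Pt θ s f x) t) ∧
      (∀ x : ℝ, 0 < x →
        HasDerivAt (fun s : ℝ => Pt θ s f x) ((1 / 2) * deriv (deriv (Pt θ t f)) x) t) ∧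
      (∃ L : ℝ, Filter.Tendsto (deriv (Pt θ t f)) (nhdsWithin 0 (Set.Ioi 0)) (nhds L) ∧
        HasDerivAt (fun s : ℝ => Pt θ s f 0) (θ * L) t) := by
  intro t ht
  obtain ⟨M, hF⟩ := hf.gf
  set g1 : ℝ → ℝ → ℝ := fun t z => 2 * θ * (gfun θ t z - ph t z) with hg1
  set g2 : ℝ → ℝ → ℝ := fun t z => 2 * θ * (g1 t z - ph1 t z) with hg2
  have gg := g_good θ hθ
  have gg1 : Good g1 := (gg.sub ph_good).smul _
  have gg2 : Good g2 := (gg1.sub ph1_good).smul _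
  have g1dx : ∀ t, 0 < t → ∀ z, HasDerivAt (g1 t) (g2 t z) z := fun t ht z =>
    ((g_dx θ t ht z).sub (ph_dx t ht z)).const_mul _
  -- first space derivative
  have D1 : ∀ x, HasDerivAt (Pt θ t f) (-II ph1 f t (-x) - II ph1 f t x + 2 * II g1 f t x
      + (1 / θ) * g1 t x * f 0) x := by
    intro x
    rw [show Pt θ t f = _ from funext fun x => Pt_eq θ hθ hF t x ht]
    have a := (ph_good.derivx ph1_good hF ph_dx ht (-x)).scomp x (hasDerivAt_neg x)
    have b := ph_good.derivx ph1_good hF ph_dx ht x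
    have c := gg.derivx gg1 hF (g_dx θ) ht x
    refine (((a.sub b).add (c.const_mul 2)).add
      (((g_dx θ t ht x).const_mul (1 / θ)).mul_const (f 0))).congr_deriv ?_
    simp [hg1]
  have D1' : deriv (Pt θ t f) = fun x => -II ph1 f t (-x) - II ph1 f t x + 2 * II g1 f t x
      + (1 / θ) * g1 t x * f 0 := funext fun x => (D1 x).deriv
  have D2 : ∀ x, HasDerivAt (deriv (Pt θ t f)) (II ph2 f t (-x) - II ph2 f t x + 2 * II g2 f t x
      + (1 / θ) * g2 t x * f 0) x := by
    intro x
    rw [D1']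
    have a := (ph1_good.derivx ph2_good hF ph1_dx ht (-x)).scomp x (hasDerivAt_neg x)
    have b := ph1_good.derivx ph2_good hF ph1_dx ht x
    have c := gg1.derivx gg2 hF g1dx ht x
    refine (((a.neg.sub b).add (c.const_mul 2)).add
      (((g1dx t ht x).const_mul (1 / θ)).mul_const (f 0))).congr_deriv ?_
    simp
  have T : ∀ x, HasDerivAt (fun s => Pt θ s f x) (1 / 2 * (II ph2 f t (-x) - II ph2 f t x
      + 2 * II g2 f t x + (1 / θ) * g2 t x * f 0)) t := by
    intro x
    have a := ph_good.derivt (ph2_good.smul (1/2)) hF ph_dt ht (-x)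
    have b := ph_good.derivt (ph2_good.smul (1/2)) hF ph_dt ht x
    have c := gg.derivt (gg2.smul (1/2)) hF (g_dt θ) ht x
    have e := (((a.sub b).add (c.const_mul 2)).add
      (((g_dt θ t ht x).const_mul (1 / θ)).mul_const (f 0)))
    refine (e.congr_deriv ?_).congr_of_eventuallyEq
      ((lt_mem_nhds ht).mono fun s hs => Pt_eq θ hθ hF s x hs)
    rw [II_smul, II_smul, II_smul]
    simp only [hg2, hg1]
    ring
  refine ⟨fun x _ => (T x).differentiableAt, fun x _ => ?_, _,
    (D2 0).continuousAt.tendsto.mono_left nhdsWithin_le_nhds, ?_⟩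
  · rw [(D2 x).deriv]; exact T x
  · refine (T 0).congr_deriv ?_
    rw [D1']
    have h1 : II g2 f t 0 = 2 * θ * (II g1 f t 0 - II ph1 f t 0) := II_lin gg1 ph1_good hF _ _ _ ht
    have h2 : g2 t 0 = 2 * θ * g1 t 0 := by simp [hg2, ph1]
    simp only [neg_zero]
    rw [h1, h2]
    field_simp
    ring
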